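/- Let n be a natural number with prime factorisation n = p_1^{α_1} ⋯ p_t^{α_t} (the p_i distinct primes). Then every skew brace of order n is a bi-skew brace if and only if α_i ≤ 2 for every i and p_i does not divide p_j^{α_j} − 1 for all i ≠ j. -/

import Mathlib

/-- A skew (left) brace: a set with two group structures `(A,+)` and `(A,∘)`
(the latter written multiplicatively) satisfying
`a ∘ (b + c) = a ∘ b - a + a ∘ c`. -/
class SkewBrace (A : Type*) extends AddGroup A, Group A where
  skew_left_distrib : ∀ a b c : A, a * (b + c) = a * b - a + a * c

/-! For a radical ring `R` the operations `+` and `x ∘ y = x + y + x * y` form a skew brace, which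
is bi-skew if and only if `R³ = 0`. If `x * y * z ≠ 0` then, after replacing `x` by a multiple of
`p`-power additive order, the chain `0 < ⟨xyz⟩ < ⟨xyz, xy⟩ < ⟨xyz, xy, x⟩` is strict because
`w * r = w` forces `w = 0` in a radical ring; hence `p³ ∣ |R|`.

If `n` satisfies the arithmetic condition, every group of order `n` is abelian: an automorphism of
prime order `q ≠ p` of a group `P` of order `p` or `p²` fixes a subgroup whose index is a power of
`p` congruent to `1` modulo `q`, so `q ∤ |Aut P|` for each Sylow subgroup `P`, and Burnside's
transfer theorem applies. A skew brace of order `n` thus comes from a commutative radical ring, of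
cube-free order.

If `p³ ∣ n`, a nil ideal of order `n` in some `ZMod m` has nonzero cube. If `p ∣ q ^ k - 1`, let an
element `u` of order `p` in the units of the field with `q ^ k` elements act on that field `M`: the
brace on `G × M` with semidirect sum and direct product is bi-skew only if `(g - 1) * (h - 1)`
annihilates `M` for all `g h : G`, but `(u - 1)² ≠ 0`. -/

theorem index_fixedPoints_modEq_one {H P : Type*} [Group H] [Group P] [Finite P]
    [MulDistribMulAction H P] {q : ℕ} [hq : Fact q.Prime] (hH : IsPGroup q H)
    (hqP : ¬ q ∣ Nat.card P) : (FixedPoints.subgroup H P).index ≡ 1 [MOD q] := by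
  have hcoprime : q.Coprime (Nat.card (FixedPoints.subgroup H P)) :=
    hq.out.coprime_iff_not_dvd.2 fun h => hqP (h.trans (Subgroup.card_subgroup_dvd_card _))
  refine Nat.ModEq.cancel_left_of_coprime hcoprime ?_
  rw [Subgroup.card_mul_index, mul_one]
  exact hH.card_modEq_card_fixedPoints P

theorem not_dvd_card_mulAut {P : Type*} [Group P] [Finite P] {p q k : ℕ} (hp : p.Prime)
    (hq : q.Prime) (hqp : q ≠ p) (hk : k ≤ 2) (hcard : Nat.card P = p ^ k)
    (hdvd : ¬ q ∣ p ^ k - 1) : ¬ q ∣ Nat.card (MulAut P) := by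
  intro hqAut
  have : Fact q.Prime := ⟨hq⟩
  obtain ⟨σ, hσ⟩ := exists_prime_orderOf_dvd_card' q hqAut
  have hqP : ¬ q ∣ Nat.card P := fun h =>
    hqp ((Nat.prime_dvd_prime_iff_eq hq hp).1 (hq.dvd_of_dvd_pow (hcard ▸ h)))
  let F := FixedPoints.subgroup (Subgroup.zpowers σ) P
  have hmod : F.index ≡ 1 [MOD q] :=
    index_fixedPoints_modEq_one
      (IsPGroup.of_card (n := 1) (by rw [Nat.card_zpowers, hσ, pow_one])) hqP
  obtain ⟨i, hik, hi⟩ := (Nat.dvd_prime_pow hp).1 (hcard ▸ F.index_dvd_card)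
  have hi_dvd : q ∣ p ^ i - 1 :=
    (Nat.modEq_iff_dvd' (Nat.one_le_pow _ _ hp.pos)).1 (hi ▸ hmod.symm)
  have hi_zero : i = 0 := by
    by_contra hi0
    have hi_dvd_k : i ∣ k := by interval_cases k <;> interval_cases i <;> simp_all
    exact hdvd (hi_dvd.trans (Nat.pow_sub_one_dvd_pow_sub_one p hi_dvd_k))
  have hF : F = ⊤ := by rw [← Subgroup.index_eq_one, hi, hi_zero, pow_zero]
  have hσ_one : σ = 1 := by
    ext x
    have hx : x ∈ F := hF ▸ Subgroup.mem_top x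
    exact hx ⟨σ, Subgroup.mem_zpowers σ⟩
  exact hq.one_lt.ne (by rw [← hσ, hσ_one, orderOf_one])

theorem normalizer_le_centralizer_of_coprime {G : Type*} [Group G] (H : Subgroup G)
    [IsMulCommutative H] (h : H.index.Coprime (Nat.card (MulAut H))) :
    Subgroup.normalizer (H : Set G) ≤ Subgroup.centralizer (H : Set G) := by
  have hAut := Subgroup.card_dvd_of_injective _
    (QuotientGroup.kerLift_injective H.normalizerMonoidHom)
  rw [Subgroup.normalizerMonoidHom_ker, ← Subgroup.index, ← Subgroup.relIndex] at hAut
  have hindex : (Subgroup.centralizer (H : Set G)).relIndex (Subgroup.normalizer (H : Set G)) ∣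
      H.index :=
    (Subgroup.relIndex_dvd_of_le_left _ H.le_centralizer).trans
      (Subgroup.relIndex_dvd_index_of_le Subgroup.le_normalizer)
  exact Subgroup.relIndex_eq_one.1 (Nat.eq_one_of_dvd_coprimes h hindex hAut)

open scoped IsMulCommutative in
theorem isMulCommutative_of_sylow_normalizer_le_centralizer {G : Type*} [Group G] [Finite G]
    (h : ∀ p ∈ (Nat.card G).primeFactors, ∀ P : Sylow p G,
      Subgroup.normalizer (P : Set G) ≤ Subgroup.centralizer (P : Set G)) :
    IsMulCommutative G := by
  rw [← commutator_eq_bot_iff, ← Subgroup.card_eq_one]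
  by_contra hne
  obtain ⟨p, hp, hdvd⟩ := Nat.exists_prime_and_dvd hne
  have : Fact p.Prime := ⟨hp⟩
  have hpG : p ∈ (Nat.card G).primeFactors :=
    Nat.mem_primeFactors.2 ⟨hp, hdvd.trans (Subgroup.card_subgroup_dvd_card _), Nat.card_pos.ne'⟩
  obtain ⟨P⟩ : Nonempty (Sylow p G) := inferInstance
  have : IsMulCommutative (P : Subgroup G) :=
    Subgroup.le_centralizer_iff_isMulCommutative.1 (Subgroup.le_normalizer.trans (h p hpG P))
  have hker : commutator G ≤ (MonoidHom.transferSylow P (h p hpG P)).ker :=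
    Abelianization.commutator_subset_ker _
  exact MonoidHom.not_dvd_card_ker_transferSylow P (h p hpG P)
    (hdvd.trans (Subgroup.card_dvd_of_le hker))

theorem isMulCommutative_of_card_eq_prime_pow {G : Type*} [Group G] {p k : ℕ} (hp : p.Prime)
    (hk : k ≤ 2) (hcard : Nat.card G = p ^ k) : IsMulCommutative G := by
  have : Fact p.Prime := ⟨hp⟩
  interval_cases k
  · have := (Nat.card_eq_one_iff_unique.1 hcard).1
    exact .of_comm fun _ _ => Subsingleton.elim _ _
  · have := isCyclic_of_prime_card (hcard.trans (pow_one p))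
    infer_instance
  · exact IsPGroup.isMulCommutative_of_card_eq_prime_sq hcard

theorem isMulCommutative_of_cubefree_of_not_dvd {G : Type*} [Group G] [Finite G]
    (hcube : ∀ p ∈ (Nat.card G).primeFactors, (Nat.card G).factorization p ≤ 2)
    (hdvd : ∀ p ∈ (Nat.card G).primeFactors, ∀ q ∈ (Nat.card G).primeFactors, p ≠ q →
      ¬ p ∣ q ^ (Nat.card G).factorization q - 1) : IsMulCommutative G := by
  refine isMulCommutative_of_sylow_normalizer_le_centralizer fun p hpG P => ?_
  have hp := Nat.prime_of_mem_primeFactors hpG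
  have : Fact p.Prime := ⟨hp⟩
  have := isMulCommutative_of_card_eq_prime_pow hp (hcube p hpG) P.card_eq_multiplicity
  refine normalizer_le_centralizer_of_coprime (P : Subgroup G)
    (Nat.coprime_of_dvd fun q hq hq_index => ?_)
  have hqp : q ≠ p := by rintro rfl; exact P.not_dvd_index hq_index
  have hqG : q ∈ (Nat.card G).primeFactors :=
    Nat.mem_primeFactors.2 ⟨hq, hq_index.trans (Subgroup.index_dvd_card _), Nat.card_pos.ne'⟩
  exact not_dvd_card_mulAut hp hq hqp (hcube p hpG) P.card_eq_multiplicity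
    (hdvd q hqG p hpG hqp)

theorem mul_card_dvd_card_of_lt {A : Type*} [AddGroup A] [Finite A] {p : ℕ}
    [hp : Fact p.Prime] {H K : AddSubgroup A} (hHK : H < K)
    (hK : ∀ x ∈ K, ∃ k : ℕ, p ^ k • x = 0) : p * Nat.card H ∣ Nat.card K := by
  have hpgroup : IsPGroup p (Multiplicative K) := fun x =>
    (hK x.toAdd x.toAdd.2).imp fun _ hk => Subtype.ext hk
  obtain ⟨n, hn⟩ := IsPGroup.iff_card.1 hpgroup
  have hcard : Nat.card H * H.relIndex K = Nat.card K := by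
    rw [← AddSubgroup.relIndex_bot_left, ← AddSubgroup.relIndex_bot_left,
      AddSubgroup.relIndex_mul_relIndex _ _ _ bot_le hHK.le]
  obtain ⟨j, -, hj⟩ := (Nat.dvd_prime_pow hp.out).1 (hn ▸ Dvd.intro_left _ hcard)
  have hj0 : j ≠ 0 := by
    rintro rfl
    exact hHK.not_ge (AddSubgroup.relIndex_eq_one.1 (hj.trans (pow_zero p)))
  rw [← hcard, hj, mul_comm]
  exact mul_dvd_mul_left _ (dvd_pow_self p hj0)

section Quasiregular

variable {R : Type*} [NonUnitalRing R]

theorem eq_zero_of_mul_eq_self {x y : R} (hy : IsQuasiregular (-y)) (h : x * y = x) : x = 0 := by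
  obtain ⟨z, hz, -⟩ := isQuasiregular_iff.1 hy
  simpa [mul_add, ← mul_assoc, h] using congrArg (x * ·) hz

open AddSubgroup in
theorem prime_pow_three_dvd_card_of_mul_mul_ne_zero [Finite R] {p : ℕ} [hp : Fact p.Prime]
    (hR : ∀ x : R, IsQuasiregular x) {x y z : R} {k : ℕ} (hx : p ^ k • x = 0)
    (hxyz : x * y * z ≠ 0) : p ^ 3 ∣ Nat.card R := by
  let H₁ := zmultiples (x * y * z)
  let H₂ := H₁ ⊔ zmultiples (x * y)
  let H₃ := H₂ ⊔ zmultiples x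
  have hxy : x * y ∉ H₁ := by
    rintro ⟨i, hi⟩
    have hself : x * y * (i • z) = x * y := by rw [mul_smul_comm]; exact hi
    exact hxyz (by rw [eq_zero_of_mul_eq_self (hR _) hself, zero_mul])
  have hx_notMem : x ∉ H₂ := by
    intro hmem
    obtain ⟨_, ⟨i, rfl⟩, _, ⟨j, rfl⟩, hij⟩ := mem_sup.1 hmem
    have hself : x * (i • (y * z) + j • y) = x := by
      rw [mul_add, mul_smul_comm, mul_smul_comm, ← mul_assoc]; exact hij
    exact hxyz (by rw [eq_zero_of_mul_eq_self (hR _) hself, zero_mul, zero_mul])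
  have htorsion : ∀ w ∈ H₃, p ^ k • w = 0 := by
    have hle : H₃ ≤ (nsmulAddMonoidHom (p ^ k) : R →+ R).ker := by
      simp [H₃, H₂, H₁, AddMonoidHom.mem_ker, hx, ← smul_mul_assoc]
    exact hle
  have hcard : ∀ {H K : AddSubgroup R}, H < K → K ≤ H₃ → p * Nat.card H ∣ Nat.card K :=
    fun hHK hK => mul_card_dvd_card_of_lt hHK fun w hw => ⟨k, htorsion w (hK hw)⟩
  calc
    p ^ 3 = p * (p * (p * Nat.card (⊥ : AddSubgroup R))) := by rw [card_bot]; ring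
    _ ∣ p * (p * Nat.card H₁) := by
      gcongr
      exact hcard (bot_lt_iff_ne_bot.2 (zmultiples_ne_bot.2 hxyz)) (le_sup_left.trans le_sup_left)
    _ ∣ p * Nat.card H₂ := by
      gcongr
      exact hcard (left_lt_sup.2 fun h => hxy (h (mem_zmultiples _))) le_sup_left
    _ ∣ Nat.card H₃ := hcard (left_lt_sup.2 fun h => hx_notMem (h (mem_zmultiples _))) le_rfl
    _ ∣ Nat.card R := card_addSubgroup_dvd_card H₃

theorem mul_mul_eq_zero_of_cubefree [Finite R] (hR : ∀ x : R, IsQuasiregular x)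
    (hcube : ∀ p : ℕ, p.Prime → ¬ p ^ 3 ∣ Nat.card R) (x y z : R) : x * y * z = 0 := by
  by_contra hxyz
  obtain ⟨p, hp, hpdvd⟩ := Nat.exists_prime_and_dvd
    (mt AddMonoid.addOrderOf_eq_one_iff.1 hxyz)
  have : Fact p.Prime := ⟨hp⟩
  obtain ⟨k, m, hpm, hcard⟩ :=
    Nat.exists_eq_pow_mul_and_not_dvd (Nat.card_pos (α := R)).ne' p hp.ne_one
  have hmx : p ^ k • m • x = 0 := by rw [smul_smul, ← hcard, card_nsmul_eq_zero']
  have hmxyz : m • x * y * z ≠ 0 := by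
    rw [smul_mul_assoc, smul_mul_assoc]
    exact fun h => hpm (hpdvd.trans (addOrderOf_dvd_of_nsmul_eq_zero h))
  exact hcube p hp (prime_pow_three_dvd_card_of_mul_mul_ne_zero hR hmx hmxyz)

theorem isQuasiregular_of_le_jacobson {S : Type*} [CommRing S] {I : Ideal S}
    (hI : I ≤ Ring.jacobson S) (x : I) : IsQuasiregular x := by
  have hunit : IsUnit (1 + (x : S)) := by
    have := Ideal.mem_jacobson_bot.1 (Ideal.jacobson_bot (R := S) ▸ hI x.2) 1
    rwa [mul_one, add_comm] at this
  obtain ⟨y, hy, hy'⟩ := isQuasiregular_iff.1 (isQuasiregular_iff_isUnit.2 hunit)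
  have hyI : y ∈ I := by
    rw [show y = -(x + x * y) by linear_combination hy]
    exact I.neg_mem (I.add_mem x.2 (I.mul_mem_right y x.2))
  exact isQuasiregular_iff.2 ⟨⟨y, hyI⟩, Subtype.ext hy, Subtype.ext hy'⟩

/-- The skew brace of a radical ring `R`: its addition and its circle operation
`x ∘ y = x + y + x * y`. The carrier is `PreQuasiregular R`, since `R` has a product of its own. -/
@[reducible]
noncomputable def circleBrace (hR : ∀ x : R, IsQuasiregular x) :
    SkewBrace (PreQuasiregular R) :=
  { toAddGroup := PreQuasiregular.equiv.symm.addGroup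
    toGroup := groupOfIsUnit fun x => isQuasiregular_iff'.1 (hR x.val)
    skew_left_distrib := fun a b c => PreQuasiregular.equiv.symm.injective <| by
      change (b.val + c.val) + a.val + a.val * (b.val + c.val) =
        (b.val + a.val + a.val * b.val) - a.val + (c.val + a.val + a.val * c.val)
      noncomm_ring }

end Quasiregular

namespace SkewBrace

/-- The bi-skew property: interchanging the two groups of `A` gives a skew brace again. Only the
compatibility axiom has to be required. -/
def IsBiSkew (A : Type*) [SkewBrace A] : Prop :=
  ∀ a b c : A, a + b * c = (a + b) * a⁻¹ * (a + c)

theorem one_eq_zero (A : Type*) [SkewBrace A] : (1 : A) = 0 := by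
  simpa using skew_left_distrib (1 : A) 0 0

section Circle

variable {A R : Type*} [SkewBrace A] [NonUnitalRing R] {e : R ≃+ A}

theorem add_mul_eq_iff_mul_mul_eq_zero (he : ∀ x y, e (x + y + x * y) = e x * e y) {x x' : R}
    (hx' : e x' = (e x)⁻¹) (y z : R) :
    e x + e y * e z = (e x + e y) * (e x)⁻¹ * (e x + e z) ↔ y * x' * z = 0 := by
  have hright : x + x' + x * x' = 0 := e.injective (by
    rw [he, hx', mul_inv_cancel, one_eq_zero, map_zero])
  have hleft : x' + x + x' * x = 0 := e.injective (by
    rw [he, hx', inv_mul_cancel, one_eq_zero, map_zero])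
  have hcancel : x + y + x' + (x + y) * x' = y + y * x' := by
    rw [← add_zero (y + y * x'), ← hright]; noncomm_ring
  have hexpand : y + y * x' + (x + z) + (y + y * x') * (x + z) =
      x + (y + z + y * z) + y * x' * z := by
    calc
      _ = x + (y + z + y * z) + y * (x' + x + x' * x) + y * x' * z := by noncomm_ring
      _ = _ := by rw [hleft, mul_zero, add_zero]
  rw [← hx', ← map_add, ← map_add, ← he, ← he, ← he, ← map_add, e.injective.eq_iff, hcancel,
    hexpand, left_eq_add]

theorem isBiSkew_iff_forall_mul_mul_eq_zero (he : ∀ x y, e (x + y + x * y) = e x * e y) :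
    IsBiSkew A ↔ ∀ x y z : R, x * y * z = 0 := by
  constructor
  · intro h y x' z
    obtain ⟨x, hx⟩ := e.surjective (e x')⁻¹
    exact (add_mul_eq_iff_mul_mul_eq_zero he (by rw [hx, inv_inv]) y z).1 (h _ _ _)
  · intro h a b c
    obtain ⟨x, rfl⟩ := e.surjective a
    obtain ⟨y, rfl⟩ := e.surjective b
    obtain ⟨z, rfl⟩ := e.surjective c
    obtain ⟨x', hx'⟩ := e.surjective (e x)⁻¹
    exact (add_mul_eq_iff_mul_mul_eq_zero he hx' y z).2 (h _ _ _)

theorem isQuasiregular_of_circle (he : ∀ x y, e (x + y + x * y) = e x * e y) (x : R) :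
    IsQuasiregular x := by
  obtain ⟨y, hy⟩ := e.surjective (e x)⁻¹
  refine isQuasiregular_iff.2 ⟨y, e.injective ?_, e.injective ?_⟩
  · rw [add_comm y, he, hy, mul_inv_cancel, one_eq_zero, map_zero]
  · rw [add_comm x, he, hy, inv_mul_cancel, one_eq_zero, map_zero]

end Circle

/-- The radical ring of a skew brace `A` with both groups abelian: the additive group of `A` with
the star product `a * b - a - b` as multiplication. A type synonym, since `A` already carries the
multiplication of its second group. -/
def RadicalRing (A : Type*) : Type _ := A

namespace RadicalRing

variable {A : Type*} [SkewBrace A] [IsAddCommutative A]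

open scoped IsMulCommutative

instance : AddCommGroup (RadicalRing A) := inferInstanceAs (AddCommGroup A)

variable (A) in
/-- The identity map from the radical ring of `A` to `A`. -/
def equiv : RadicalRing A ≃+ A := AddEquiv.refl A

instance : Mul (RadicalRing A) where
  mul x y := (equiv A).symm (equiv A x * equiv A y - equiv A x - equiv A y)

theorem equiv_circle (x y : RadicalRing A) :
    equiv A (x + y + x * y) = equiv A x * equiv A y := by
  change equiv A x + equiv A y + (equiv A x * equiv A y - equiv A x - equiv A y) = _
  abel

protected theorem mul_add (x y z : RadicalRing A) : x * (y + z) = x * y + x * z := by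
  have h : x + (y + z) + x * (y + z) = (x + y + x * y) - x + (x + z + x * z) :=
    (equiv A).injective <| by
      rw [equiv_circle, map_add, skew_left_distrib, map_add, map_sub, equiv_circle, equiv_circle]
  rw [← add_right_inj (x + (y + z)), h]
  abel

variable [IsMulCommutative A]

protected theorem mul_comm (x y : RadicalRing A) : x * y = y * x :=
  add_left_cancel (a := x + y) <| (equiv A).injective <| by
    rw [equiv_circle, add_comm x, equiv_circle, mul_comm]

protected theorem add_mul (x y z : RadicalRing A) : (x + y) * z = x * z + y * z := by
  simp only [RadicalRing.mul_comm _ z, RadicalRing.mul_add]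

protected theorem mul_assoc (x y z : RadicalRing A) : x * y * z = x * (y * z) := by
  have h : (x + y + x * y) + z + (x + y + x * y) * z =
      x + (y + z + y * z) + x * (y + z + y * z) :=
    (equiv A).injective <| by simp only [equiv_circle, mul_assoc]
  simp only [RadicalRing.mul_add, RadicalRing.add_mul] at h
  rw [← sub_eq_zero] at h ⊢
  rw [← h]
  abel

instance : NonUnitalCommRing (RadicalRing A) where
  left_distrib := RadicalRing.mul_add
  right_distrib := RadicalRing.add_mul
  zero_mul x := by simpa using RadicalRing.add_mul 0 0 x
  mul_zero x := by simpa using RadicalRing.mul_add x 0 0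
  mul_assoc := RadicalRing.mul_assoc
  mul_comm := RadicalRing.mul_comm

end RadicalRing

theorem isBiSkew_of_cubefree {A : Type*} [SkewBrace A] [Finite A] [IsAddCommutative A]
    [IsMulCommutative A] (hcube : ∀ p : ℕ, p.Prime → ¬ p ^ 3 ∣ Nat.card A) : IsBiSkew A := by
  have : Finite (RadicalRing A) := .of_equiv A (RadicalRing.equiv A).symm
  refine (isBiSkew_iff_forall_mul_mul_eq_zero RadicalRing.equiv_circle).2
    (mul_mul_eq_zero_of_cubefree (isQuasiregular_of_circle RadicalRing.equiv_circle) ?_)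
  rwa [Nat.card_congr (RadicalRing.equiv A).toEquiv]

theorem isBiSkew_of_cubefree_of_not_dvd {A : Type*} [SkewBrace A] [Finite A]
    (hcube : ∀ p ∈ (Nat.card A).primeFactors, (Nat.card A).factorization p ≤ 2)
    (hdvd : ∀ p ∈ (Nat.card A).primeFactors, ∀ q ∈ (Nat.card A).primeFactors, p ≠ q →
      ¬ p ∣ q ^ (Nat.card A).factorization q - 1) : IsBiSkew A := by
  have hmul : IsMulCommutative A := isMulCommutative_of_cubefree_of_not_dvd hcube hdvd
  have : IsMulCommutative (Multiplicative A) :=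
    isMulCommutative_of_cubefree_of_not_dvd (G := Multiplicative A) hcube hdvd
  have hadd : IsAddCommutative A :=
    .of_comm fun a b => mul_comm' (Multiplicative.ofAdd a) (Multiplicative.ofAdd b)
  refine isBiSkew_of_cubefree fun p hp hp3 => ?_
  have hle := (hp.pow_dvd_iff_le_factorization Nat.card_pos.ne').1 hp3
  have hpA : p ∈ (Nat.card A).primeFactors :=
    Nat.mem_primeFactors.2 ⟨hp, (dvd_pow_self p three_ne_zero).trans hp3, Nat.card_pos.ne'⟩
  exact absurd (hcube p hpA) (by lia)

end SkewBrace

theorem SkewBrace.isBiSkew_circleBrace_iff {R : Type*} [NonUnitalRing R]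
    (hR : ∀ x : R, IsQuasiregular x) :
    letI := circleBrace hR
    SkewBrace.IsBiSkew (PreQuasiregular R) ↔ ∀ x y z : R, x * y * z = 0 := by
  let := circleBrace hR
  let e : R ≃+ PreQuasiregular R := { PreQuasiregular.equiv with map_add' := fun _ _ => rfl }
  refine SkewBrace.isBiSkew_iff_forall_mul_mul_eq_zero (e := e) fun x y => ?_
  rw [add_comm x]
  rfl

theorem toAddSubgroup_span_singleton {m : ℕ} (x : ZMod m) :
    (Ideal.span {x}).toAddSubgroup = AddSubgroup.zmultiples x := by
  rw [← Submodule.span_singleton_toAddSubgroup_eq_zmultiples,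
    ← Submodule.restrictScalars_span ℤ (ZMod m) ZMod.intCast_surjective]
  rfl

theorem card_span_natCast {r : ℕ} (hr : r ≠ 0) (n : ℕ) :
    Nat.card (Ideal.span {(r : ZMod (r * n))}) = n := by
  change Nat.card (Ideal.span {(r : ZMod (r * n))}).toAddSubgroup = n
  rw [toAddSubgroup_span_singleton, Nat.card_zmultiples, ZMod.addOrderOf_coe' _ hr,
    Nat.gcd_eq_right (dvd_mul_right r n), Nat.mul_div_cancel_left _ (Nat.pos_of_ne_zero hr)]

theorem exists_not_isBiSkew_of_dvd_pow {n r k : ℕ} (hn : n ∣ r ^ k) (h2 : ¬ n ∣ r ^ 2) :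
    ∃ (A : Type) (_ : SkewBrace A), Nat.card A = n ∧ ¬ SkewBrace.IsBiSkew A := by
  have hr : r ≠ 0 := by rintro rfl; simp at h2
  let I : Ideal (ZMod (r * n)) := Ideal.span {(r : ZMod (r * n))}
  let x : I := ⟨r, Ideal.mem_span_singleton_self _⟩
  have hnil : IsNilpotent (r : ZMod (r * n)) := by
    refine ⟨k + 1, ?_⟩
    rw [← Nat.cast_pow, ZMod.natCast_eq_zero_iff, pow_succ']
    exact mul_dvd_mul_left r hn
  have hI : I ≤ Ring.jacobson (ZMod (r * n)) := by
    refine le_trans ?_ (nilradical_le_jacobson _)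
    rwa [Ideal.span_singleton_le_iff_mem, mem_nilradical]
  have hR : ∀ x : I, IsQuasiregular x := isQuasiregular_of_le_jacobson hI
  refine ⟨PreQuasiregular I, circleBrace hR, ?_, fun h => h2 ?_⟩
  · rw [← Nat.card_congr PreQuasiregular.equiv]
    exact card_span_natCast hr n
  · have hx := (SkewBrace.isBiSkew_circleBrace_iff hR).1 h x x x
    have hx' : (r : ZMod (r * n)) * r * r = 0 := congrArg Subtype.val hx
    rw [← pow_two, ← pow_succ, ← Nat.cast_pow, ZMod.natCast_eq_zero_iff, pow_succ'] at hx'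
    exact Nat.dvd_of_mul_dvd_mul_left (Nat.pos_of_ne_zero hr) hx'

theorem exists_not_isBiSkew_of_prime_pow_three_dvd {n p : ℕ} (hn : n ≠ 0) (hp : p.Prime)
    (h : p ^ 3 ∣ n) : ∃ (A : Type) (_ : SkewBrace A), Nat.card A = n ∧ ¬ SkewBrace.IsBiSkew A := by
  obtain ⟨k, m, hpm, rfl⟩ := Nat.exists_eq_pow_mul_and_not_dvd hn p hp.ne_one
  have hcop (j : ℕ) : (p ^ j).Coprime m := (hp.coprime_iff_not_dvd.2 hpm).pow_left j
  have hk : 3 ≤ k := (Nat.pow_dvd_pow_iff_le_right hp.one_lt).1 <| (hcop 3).dvd_of_dvd_mul_right h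
  refine exists_not_isBiSkew_of_dvd_pow (r := p * m) (k := k) ?_ fun hdvd => ?_
  · rw [mul_pow]
    exact mul_dvd_mul_left _ (dvd_pow_self m (by lia))
  · rw [mul_pow] at hdvd
    have hk2 := (Nat.pow_dvd_pow_iff_le_right hp.one_lt).1 <|
      ((hcop k).pow_right 2).dvd_of_dvd_mul_right ((dvd_mul_right _ _).trans hdvd)
    lia

/-- The skew brace on `G × M` whose additive group is the semidirect product, with
`(g, x) + (h, y) = (g * h, h⁻¹ • x + y)`, and whose multiplicative group is the direct product. -/
@[ext]
structure SemidirectBrace (G M : Type*) where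
  fst : G
  snd : M

namespace SemidirectBrace

theorem card_eq (G M : Type*) : Nat.card (SemidirectBrace G M) = Nat.card G * Nat.card M := by
  rw [← Nat.card_prod]
  exact Nat.card_congr ⟨fun a => (a.1, a.2), fun a => ⟨a.1, a.2⟩, fun _ => rfl, fun _ => rfl⟩

variable {G M : Type*} [Group G] [AddCommGroup M]

@[simps]
instance : Mul (SemidirectBrace G M) where mul a b := ⟨a.fst * b.fst, a.snd + b.snd⟩
@[simps]
instance : One (SemidirectBrace G M) where one := ⟨1, 0⟩
@[simps]
instance : Inv (SemidirectBrace G M) where inv a := ⟨a.fst⁻¹, -a.snd⟩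

instance : Group (SemidirectBrace G M) :=
  Group.ofLeftAxioms (fun _ _ _ => by ext <;> simp [mul_assoc, add_assoc])
    (fun _ => by ext <;> simp) (fun _ => by ext <;> simp)

variable [DistribMulAction G M]

@[simps]
instance : Add (SemidirectBrace G M) where
  add a b := ⟨a.fst * b.fst, b.fst⁻¹ • a.snd + b.snd⟩
@[simps]
instance : Zero (SemidirectBrace G M) where zero := ⟨1, 0⟩
@[simps]
instance : Neg (SemidirectBrace G M) where neg a := ⟨a.fst⁻¹, -(a.fst • a.snd)⟩

instance : AddGroup (SemidirectBrace G M) :=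
  AddGroup.ofLeftAxioms (fun _ _ _ => by ext <;> simp [mul_assoc, add_assoc, mul_smul])
    (fun _ => by ext <;> simp) (fun _ => by ext <;> simp)

instance : SkewBrace (SemidirectBrace G M) where
  skew_left_distrib a b c := by
    ext
    · simp [sub_eq_add_neg, mul_assoc]
    · simp [sub_eq_add_neg, mul_smul]; abel

theorem smul_smul_eq_of_isBiSkew (h : SkewBrace.IsBiSkew (SemidirectBrace G M)) (g k : G) (x : M) :
    g • k • x = k • x - x + g • x := by
  have := congrArg snd (h ⟨1, x⟩ ⟨k⁻¹, 0⟩ ⟨g⁻¹, 0⟩)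
  simpa [mul_smul, sub_eq_add_neg] using this

end SemidirectBrace

theorem exists_not_isBiSkew_of_dvd_card_units (F : Type) [Field F] [Finite F] {p : ℕ}
    (hp : p.Prime) (hdvd : p ∣ Nat.card Fˣ) (k : ℕ) :
    ∃ (A : Type) (_ : SkewBrace A), Nat.card A = p * k * Nat.card F ∧ ¬ SkewBrace.IsBiSkew A := by
  have : Fact p.Prime := ⟨hp⟩
  obtain ⟨u, hu⟩ := exists_prime_orderOf_dvd_card' p hdvd
  let φ : Subgroup.zpowers u × Multiplicative (ZMod k) →* Fˣ :=
    (Subgroup.zpowers u).subtype.comp (MonoidHom.fst _ _)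
  let : DistribMulAction (Subgroup.zpowers u × Multiplicative (ZMod k)) F :=
    DistribMulAction.compHom F φ
  refine ⟨SemidirectBrace (Subgroup.zpowers u × Multiplicative (ZMod k)) F, inferInstance, ?_,
    fun h => hp.one_lt.ne' ?_⟩
  · rw [SemidirectBrace.card_eq, Nat.card_prod, Nat.card_zpowers, hu,
      Nat.card_congr Multiplicative.toAdd, Nat.card_zmod]
  · let g : Subgroup.zpowers u × Multiplicative (ZMod k) := (⟨u, Subgroup.mem_zpowers u⟩, 1)
    have hu_sq : (u : F) * (u * 1) = u * 1 - 1 + u * 1 :=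
      SemidirectBrace.smul_smul_eq_of_isBiSkew h g g (1 : F)
    have hu_one : ((u : F) - 1) ^ 2 = 0 := by linear_combination hu_sq
    rw [← hu, orderOf_eq_one_iff, Units.ext_iff, Units.val_one, ← sub_eq_zero]
    exact pow_eq_zero_iff two_ne_zero |>.1 hu_one

theorem exists_not_isBiSkew_of_dvd_prime_pow_sub_one {n p q k : ℕ} (hp : p.Prime) (hq : q.Prime)
    (hk : k ≠ 0) (hn : p * q ^ k ∣ n) (hdvd : p ∣ q ^ k - 1) :
    ∃ (A : Type) (_ : SkewBrace A), Nat.card A = n ∧ ¬ SkewBrace.IsBiSkew A := by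
  have : Fact q.Prime := ⟨hq⟩
  obtain ⟨m, rfl⟩ := hn
  rw [show p * q ^ k * m = p * m * Nat.card (GaloisField q k) by
    rw [GaloisField.card q k hk]; ring]
  exact exists_not_isBiSkew_of_dvd_card_units _ hp
    (by rwa [Nat.card_units, GaloisField.card q k hk]) m

theorem exists_not_isBiSkew_of_dvd_factorization {n p q : ℕ} (hpn : p ∈ n.primeFactors)
    (hqn : q ∈ n.primeFactors) (hpq : p ≠ q) (hdvd : p ∣ q ^ n.factorization q - 1) :
    ∃ (A : Type) (_ : SkewBrace A), Nat.card A = n ∧ ¬ SkewBrace.IsBiSkew A := by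
  obtain ⟨hp, hp_dvd, hn⟩ := Nat.mem_primeFactors.1 hpn
  obtain ⟨hq, hq_dvd, -⟩ := Nat.mem_primeFactors.1 hqn
  have hk : n.factorization q ≠ 0 := (hq.factorization_pos_of_dvd hn hq_dvd).ne'
  exact exists_not_isBiSkew_of_dvd_prime_pow_sub_one hp hq hk
    ((((Nat.coprime_primes hp hq).2 hpq).pow_right _).mul_dvd_of_dvd_of_dvd hp_dvd
      (Nat.ordProj_dvd n q)) hdvd

/-- Every skew brace of order `n` is a bi-skew brace (i.e. `(A,∘,+)` is also
a skew brace: `a + (b ∘ c) = (a + b) ∘ a⁻¹ ∘ (a + c)`) iff the prime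
factorisation of `n` is cube-free and `p ∤ q^{α_q} - 1` for distinct primes
`p, q` dividing `n`. -/
theorem every_skewBrace_is_bi_skew_iff (n : ℕ) (hn : 0 < n) :
    (∀ (A : Type) [Fintype A] [SkewBrace A], Fintype.card A = n →
      (∀ a b c : A, a + b * c = (a + b) * a⁻¹ * (a + c))) ↔
    ((∀ p ∈ n.primeFactors, n.factorization p ≤ 2) ∧
      (∀ p ∈ n.primeFactors, ∀ q ∈ n.primeFactors, p ≠ q →
        ¬ p ∣ q ^ n.factorization q - 1)) := by
  constructor
  · intro h
    have hbi (A : Type) (_ : SkewBrace A) (hA : Nat.card A = n) : SkewBrace.IsBiSkew A := by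
      have : Finite A := Nat.finite_of_card_ne_zero (hA ▸ hn.ne')
      have := Fintype.ofFinite A
      exact h A (Nat.card_eq_fintype_card.symm.trans hA)
    constructor
    · intro p hpn
      by_contra! hlt
      obtain ⟨A, _, hA, hnot⟩ := exists_not_isBiSkew_of_prime_pow_three_dvd hn.ne'
        (Nat.prime_of_mem_primeFactors hpn) ((pow_dvd_pow p hlt).trans (Nat.ordProj_dvd n p))
      exact hnot (hbi A _ hA)
    · intro p hpn q hqn hpq hdvd
      obtain ⟨A, _, hA, hnot⟩ := exists_not_isBiSkew_of_dvd_factorization hpn hqn hpq hdvd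
      exact hnot (hbi A _ hA)
  · rintro ⟨hcube, hdvd⟩ A _ _ rfl
    simp only [← Nat.card_eq_fintype_card] at hcube hdvd
    exact SkewBrace.isBiSkew_of_cubefree_of_not_dvd hcube hdvd
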